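/- arXiv:1502.02799 — 3 statements merged into one kernel-verified Lean document; each statement's English description precedes it below -/
import Mathlib

section
/- Let c1 and c2 be two resolvable clauses and let Q, H ⊆ 𝒜 be disjoint sets of atoms with Var(c1 ∪ c2) ⊆ Q ∪ H. If Q and H satisfy the QH-conditions for both c1 and c2, then Q and H satisfy the QH-conditions for res(c1,c2). -/
variable {α : Type*} [Fintype α] [DecidableEq α]

/-- A clause (or term): a finite set of literals, where a literal is an atom
paired with a polarity (`true` = positive occurrence, `false` = negated). -/
abbrev Clause (α : Type*) := Finset (α × Bool)

/-- A finite set of literals is a legal clause/term if it contains no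
complementary pair of literals. -/
def IsClause (c : Clause α) : Prop := ∀ p : α, ¬((p, true) ∈ c ∧ (p, false) ∈ c)

instance : DecidablePred (IsClause (α := α)) := fun c =>
  decidable_of_iff (∀ p : α, ¬((p, true) ∈ c ∧ (p, false) ∈ c)) Iff.rfl

/-- The atoms occurring in a clause/term. -/
def varsC (c : Clause α) : Finset α := c.image Prod.fst

/-- The atoms occurring positively in a clause/term. -/
def posC (c : Clause α) : Finset α := (c.filter fun l => l.2 = true).image Prod.fst

/-- The atoms occurring negatively in a clause/term. -/
def negC (c : Clause α) : Finset α := (c.filter fun l => l.2 = false).image Prod.fst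

/-- The resolvent of two clauses on atom `p`. -/
def res (c c' : Clause α) (p : α) : Clause α :=
  (c ∪ c') \ ({(p, true), (p, false)} : Finset (α × Bool))

/-- `c` and `c'` are resolvable on atom `p`: `p` occurs in one of them and `¬p` in
the other, and the resolvent contains no complementary pair of literals. -/
def ResolvableOn (c c' : Clause α) (p : α) : Prop :=
  ((p, true) ∈ c ∧ (p, false) ∈ c' ∨ (p, false) ∈ c ∧ (p, true) ∈ c') ∧ IsClause (res c c' p)

/-- Renaming of a literal: flip the polarity of atoms in `V`. -/
def renLit (V : Finset α) (l : α × Bool) : α × Bool := if l.1 ∈ V then (l.1, !l.2) else l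

/-- Renaming of a clause w.r.t. the atoms in `V`. -/
def renClause (V : Finset α) (c : Clause α) : Clause α := c.image (renLit V)

/-- Renaming of a CNF theory w.r.t. the atoms in `V`. -/
def renTheory (V : Finset α) (T : Finset (Clause α)) : Finset (Clause α) := T.image (renClause V)

/-- A Horn clause: at most one positive literal. -/
def HornClause (c : Clause α) : Prop := (posC c).card ≤ 1

/-- A Horn theory: a finite set of Horn clauses. -/
def IsHornTheory (T : Finset (Clause α)) : Prop := ∀ c ∈ T, HornClause c

/-- A Krom theory: each clause contains at most 2 literals. -/
def IsKromTheory (T : Finset (Clause α)) : Prop := ∀ c ∈ T, c.card ≤ 2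

/-- `T` is Horn renamable: some renaming of `T` is a Horn theory. -/
def IsRenHorn (T : Finset (Clause α)) : Prop := ∃ V : Finset α, IsHornTheory (renTheory V T)

/-- The QH-conditions for sets of atoms `Q`, `H` and a clause `c`. -/
def QHcond (Q H : Finset α) (c : Clause α) : Prop :=
  (varsC c ∩ Q).card ≤ 2 ∧ (posC c ∩ H).card ≤ 1 ∧
    ((posC c ∩ H).card = 1 → varsC c ∩ Q = ∅)

/-- The atoms occurring in a CNF theory. -/
def varsT (T : Finset (Clause α)) : Finset α := T.sup varsC

/-- `T` has a QH-partition: a partition `{Q, H}` of its atoms satisfying the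
QH-conditions for each of its clauses. -/
def HasQHPartition (T : Finset (Clause α)) : Prop :=
  ∃ Q H : Finset α, Q ∩ H = ∅ ∧ Q ∪ H = varsT T ∧ ∀ c ∈ T, QHcond Q H c

/-- `T` is q-Horn: some renaming of `T` has a QH-partition. -/
def IsQHorn (T : Finset (Clause α)) : Prop := ∃ V : Finset α, HasQHPartition (renTheory V T)

/-- Satisfaction of a literal by an interpretation (a set of atoms). -/
def litSat (I : Set α) (l : α × Bool) : Prop := if l.2 then l.1 ∈ I else l.1 ∉ I

/-- Satisfaction of a clause (read disjunctively). -/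
def clauseSat (I : Set α) (c : Clause α) : Prop := ∃ l ∈ c, litSat I l

/-- Satisfaction of a term (read conjunctively). -/
def termSat (I : Set α) (t : Clause α) : Prop := ∀ l ∈ t, litSat I l

/-- Satisfaction of a CNF theory. -/
def cnfSat (I : Set α) (T : Finset (Clause α)) : Prop := ∀ c ∈ T, clauseSat I c

/-- One step of the resolution closure. -/
def resStep (S : Set (Clause α)) : Set (Clause α) :=
  S ∪ {d | ∃ c ∈ S, ∃ c' ∈ S, ∃ p : α, ResolvableOn c c' p ∧ d = res c c' p}

/-- The iterated resolution closure `res^n_T`. -/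
def resIter (T : Finset (Clause α)) : ℕ → Set (Clause α)
  | 0 => (↑T : Set (Clause α))
  | n + 1 => resStep (resIter T n)

/-- Propositional formulas over atoms `α`. -/
inductive PropForm (α : Type*) where
  | var : α → PropForm α
  | tru : PropForm α
  | fls : PropForm α
  | neg : PropForm α → PropForm α
  | conj : PropForm α → PropForm α → PropForm α
  | disj : PropForm α → PropForm α → PropForm α

namespace PropForm

/-- Satisfaction of a formula by an interpretation. -/
def Sat (I : Set α) : PropForm α → Prop
  | var p => p ∈ I
  | tru => True
  | fls => False
  | neg φ => ¬ Sat I φ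
  | conj φ ψ => Sat I φ ∧ Sat I ψ
  | disj φ ψ => Sat I φ ∨ Sat I ψ

/-- Logical equivalence: same models. -/
def equivalent (φ ψ : PropForm α) : Prop := ∀ I : Set α, Sat I φ ↔ Sat I ψ

/-- Entailment: every model of `φ` is a model of `ψ`. -/
def entails (φ ψ : PropForm α) : Prop := ∀ I : Set α, Sat I φ → Sat I ψ

/-- The atoms occurring in a formula. -/
def vars : PropForm α → Finset α
  | var p => {p}
  | tru => ∅
  | fls => ∅
  | neg φ => vars φ
  | conj φ ψ => vars φ ∪ vars ψ
  | disj φ ψ => vars φ ∪ vars ψ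

/-- Substitution of the formula `χ` for the atom `p`. -/
def subst (p : α) (χ : PropForm α) : PropForm α → PropForm α
  | var q => if q = p then χ else var q
  | tru => tru
  | fls => fls
  | neg φ => neg (subst p χ φ)
  | conj φ ψ => conj (subst p χ φ) (subst p χ ψ)
  | disj φ ψ => disj (subst p χ φ) (subst p χ ψ)

/-- Forgetting a single atom: `Forget(φ, {p}) = φ[p/⊤] ∨ φ[p/⊥]`. -/
def forget1 (φ : PropForm α) (p : α) : PropForm α := disj (subst p tru φ) (subst p fls φ)

/-- Forgetting a set of atoms (presented as a list), one atom at a time: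
`Forget(φ, ∅) = φ` and `Forget(φ, V ∪ {p}) = Forget(Forget(φ, {p}), V)`. -/
def Forget : PropForm α → List α → PropForm α
  | φ, [] => φ
  | φ, p :: V => Forget (forget1 φ p) V

/-- Renaming of a formula: replace each occurrence of an atom `p ∈ V` by `¬p`. -/
def renForm (V : Finset α) : PropForm α → PropForm α
  | var p => if p ∈ V then neg (var p) else var p
  | tru => tru
  | fls => fls
  | neg φ => neg (renForm V φ)
  | conj φ ψ => conj (renForm V φ) (renForm V ψ)
  | disj φ ψ => disj (renForm V φ) (renForm V ψ)

/-- `φ` is irrelevant to the atoms in `V`: it is equivalent to a formula not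
mentioning any atom of `V`. -/
def IR (φ : PropForm α) (V : List α) : Prop :=
  ∃ φ' : PropForm α, equivalent φ φ' ∧ ∀ p ∈ V, p ∉ vars φ'

end PropForm

/-- The formula corresponding to a literal. -/
def litToForm (l : α × Bool) : PropForm α :=
  if l.2 then PropForm.var l.1 else PropForm.neg (PropForm.var l.1)

/-- The disjunction of the literals of a clause. -/
noncomputable def clauseToForm (c : Clause α) : PropForm α :=
  c.toList.foldr (fun l φ => PropForm.disj (litToForm l) φ) PropForm.fls

/-- The conjunction of the clauses of a CNF theory. -/
noncomputable def cnfToForm (T : Finset (Clause α)) : PropForm α :=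
  T.toList.foldr (fun c φ => PropForm.conj (clauseToForm c) φ) PropForm.tru

/-- `φ` is Horn expressible. -/
def HornExpressible (φ : PropForm α) : Prop :=
  ∃ T : Finset (Clause α), (∀ c ∈ T, IsClause c) ∧ IsHornTheory T ∧
    PropForm.equivalent φ (cnfToForm T)

/-- `φ` is Krom expressible. -/
def KromExpressible (φ : PropForm α) : Prop :=
  ∃ T : Finset (Clause α), (∀ c ∈ T, IsClause c) ∧ IsKromTheory T ∧
    PropForm.equivalent φ (cnfToForm T)

/-- `φ` is renamable-Horn expressible. -/
def RenHornExpressible (φ : PropForm α) : Prop :=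
  ∃ T : Finset (Clause α), (∀ c ∈ T, IsClause c) ∧ IsRenHorn T ∧
    PropForm.equivalent φ (cnfToForm T)

/-- `φ` is q-Horn expressible. -/
def QHornExpressible (φ : PropForm α) : Prop :=
  ∃ T : Finset (Clause α), (∀ c ∈ T, IsClause c) ∧ IsQHorn T ∧
    PropForm.equivalent φ (cnfToForm T)

/-- A formula entails a clause. -/
def EntailsClause (φ : PropForm α) (c : Clause α) : Prop :=
  ∀ I : Set α, PropForm.Sat I φ → clauseSat I c

/-- A prime implicate of a formula. -/
def IsPrimeImplicate (φ : PropForm α) (c : Clause α) : Prop :=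
  IsClause c ∧ EntailsClause φ c ∧ ∀ c' ⊂ c, ¬ EntailsClause φ c'

/-- A term entails a formula. -/
def TermEntails (t : Clause α) (φ : PropForm α) : Prop :=
  ∀ I : Set α, termSat I t → PropForm.Sat I φ

/-- A prime implicant of a formula. -/
def IsPrimeImplicant (φ : PropForm α) (t : Clause α) : Prop :=
  IsClause t ∧ TermEntails t φ ∧ ∀ t' ⊂ t, ¬ TermEntails t' φ

/-- A CNF theory entails a clause. -/
def TheoryEntailsClause (T : Finset (Clause α)) (c : Clause α) : Prop :=
  ∀ I : Set α, cnfSat I T → clauseSat I c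

/-- A prime implicate of a CNF theory. -/
def IsPrimeImplicateT (T : Finset (Clause α)) (c : Clause α) : Prop :=
  IsClause c ∧ TheoryEntailsClause T c ∧ ∀ c' ⊂ c, ¬ TheoryEntailsClause T c'

/-- The set of prime implicates of a CNF theory, as a finite theory. -/
noncomputable def PI (T : Finset (Clause α)) : Finset (Clause α) :=
  (Set.toFinite {c : Clause α | IsPrimeImplicateT T c}).toFinset

/-- Strong unfolding of a CNF theory w.r.t. an atom `p`: keep the clauses not
mentioning `p`, and replace the clauses containing the positive literal `p` by all
their resolvents with clauses containing `¬p`; clauses containing `¬p` are removed. -/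
def unfold1 (T : Finset (Clause α)) (p : α) : Finset (Clause α) :=
  T.filter (fun c => (p, true) ∉ c ∧ (p, false) ∉ c) ∪
    ((T ×ˢ T).filter fun cc =>
        (p, true) ∈ cc.1 ∧ (p, false) ∈ cc.2 ∧ IsClause (res cc.1 cc.2 p)).image
      fun cc => res cc.1 cc.2 p

/-- Iterated strong unfolding w.r.t. a set of atoms (presented as a list):
`unfold(T, ∅) = T` and `unfold(T, V ∪ {p}) = unfold(unfold(T, p), V)`. -/
def unfoldList (T : Finset (Clause α)) : List α → Finset (Clause α)
  | [] => T
  | p :: V => unfoldList (unfold1 T p) V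

/-!
Resolving on `p` merges the two clauses and erases the atom `p`, from the variables and from the
positive atoms alike. If `p ∈ Q`, both parents meet `Q`, so neither has a positive atom in `H`, and
each loses one of its at most two atoms of `Q`. If `p ∈ H`, the parent containing `p` positively has
no other positive atom in `H` and no atom in `Q`, so the resolvent inherits the QH-conditions from
the other parent.
-/

section

omit [Fintype α]

theorem mem_varsC {c : Clause α} {a : α} : a ∈ varsC c ↔ ∃ b, (a, b) ∈ c := by
  simp [varsC]

theorem mem_posC {c : Clause α} {a : α} : a ∈ posC c ↔ (a, true) ∈ c := by
  simp [posC]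

theorem mem_res {c d : Clause α} {p : α} {l : α × Bool} :
    l ∈ res c d p ↔ l.1 ≠ p ∧ (l ∈ c ∨ l ∈ d) := by
  obtain ⟨a, _ | _⟩ := l <;> simp [res, and_comm]

theorem res_comm (c d : Clause α) (p : α) : res c d p = res d c p := by
  rw [res, res, Finset.union_comm]

theorem varsC_res (c d : Clause α) (p : α) :
    varsC (res c d p) = (varsC c ∪ varsC d).erase p := by
  ext a
  simp only [mem_varsC, mem_res, Finset.mem_erase, Finset.mem_union, exists_and_left, exists_or]

theorem posC_res (c d : Clause α) (p : α) :
    posC (res c d p) = (posC c ∪ posC d).erase p := by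
  ext a
  simp only [mem_posC, mem_res, Finset.mem_erase, Finset.mem_union]

theorem varsC_res_inter (c d : Clause α) (p : α) (s : Finset α) :
    varsC (res c d p) ∩ s = (varsC c ∩ s ∪ varsC d ∩ s).erase p := by
  rw [varsC_res, Finset.erase_inter, Finset.union_inter_distrib_right]

theorem posC_res_inter (c d : Clause α) (p : α) (s : Finset α) :
    posC (res c d p) ∩ s = (posC c ∩ s ∪ posC d ∩ s).erase p := by
  rw [posC_res, Finset.erase_inter, Finset.union_inter_distrib_right]

theorem ResolvableOn.mem_varsC_union {c d : Clause α} {p : α} (h : ResolvableOn c d p) :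
    p ∈ varsC (c ∪ d) := by
  rcases h.1 with ⟨hpc, _⟩ | ⟨hpc, _⟩ <;> exact mem_varsC.2 ⟨_, Finset.mem_union_left d hpc⟩

theorem card_erase_union_add_two_le {s t : Finset α} {a : α} (hs : a ∈ s) (ht : a ∈ t) :
    ((s ∪ t).erase a).card + 2 ≤ s.card + t.card := by
  have hs_card := Finset.card_erase_add_one hs
  have ht_card := Finset.card_erase_add_one ht
  have h_union := Finset.card_union_le (s.erase a) (t.erase a)
  rw [Finset.erase_union_distrib]
  omega

namespace QHcond

variable {Q H : Finset α} {c d : Clause α} {p : α}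

theorem varsC_inter_eq_empty (hc : QHcond Q H c) (hpos : (posC c ∩ H).Nonempty) :
    varsC c ∩ Q = ∅ :=
  hc.2.2 (le_antisymm hc.2.1 hpos.card_pos)

theorem posC_inter_eq_empty (hc : QHcond Q H c) (hvars : (varsC c ∩ Q).Nonempty) :
    posC c ∩ H = ∅ := by
  contrapose! hvars
  exact hc.varsC_inter_eq_empty hvars

theorem posC_inter_eq_singleton (hc : QHcond Q H c) (hpc : p ∈ posC c) (hpH : p ∈ H) :
    posC c ∩ H = {p} :=
  Finset.eq_singleton_iff_unique_mem.2
    ⟨Finset.mem_inter.2 ⟨hpc, hpH⟩, fun _ ha =>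
      Finset.card_le_one.1 hc.2.1 _ ha _ (Finset.mem_inter.2 ⟨hpc, hpH⟩)⟩

theorem mono (hc : QHcond Q H c) (hvars : varsC d ∩ Q ⊆ varsC c ∩ Q)
    (hpos : posC d ∩ H ⊆ posC c ∩ H) : QHcond Q H d := by
  refine ⟨(Finset.card_le_card hvars).trans hc.1, (Finset.card_le_card hpos).trans hc.2.1,
    fun hone => ?_⟩
  have hd_pos : (posC d ∩ H).Nonempty := Finset.card_pos.1 (by omega)
  rw [hc.varsC_inter_eq_empty (hd_pos.mono hpos)] at hvars
  exact Finset.subset_empty.1 hvars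

theorem res_of_mem_Q (hc : QHcond Q H c) (hd : QHcond Q H d) (hpc : p ∈ varsC c)
    (hpd : p ∈ varsC d) (hpQ : p ∈ Q) : QHcond Q H (res c d p) := by
  have hpcQ : p ∈ varsC c ∩ Q := Finset.mem_inter.2 ⟨hpc, hpQ⟩
  have hpdQ : p ∈ varsC d ∩ Q := Finset.mem_inter.2 ⟨hpd, hpQ⟩
  have hpos : posC (res c d p) ∩ H = ∅ := by
    rw [posC_res_inter, hc.posC_inter_eq_empty ⟨p, hpcQ⟩, hd.posC_inter_eq_empty ⟨p, hpdQ⟩,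
      Finset.empty_union, Finset.erase_empty]
  have hvars : (varsC (res c d p) ∩ Q).card ≤ 2 := by
    have hcard := card_erase_union_add_two_le hpcQ hpdQ
    have hc_card := hc.1
    have hd_card := hd.1
    rw [varsC_res_inter]
    omega
  exact ⟨hvars, by simp [hpos], by simp [hpos]⟩

theorem res_of_mem_H (hc : QHcond Q H c) (hd : QHcond Q H d) (hpc : p ∈ posC c)
    (hpH : p ∈ H) : QHcond Q H (res c d p) := by
  have hpos_c : posC c ∩ H = {p} := hc.posC_inter_eq_singleton hpc hpH
  have hvars_c : varsC c ∩ Q = ∅ := hc.varsC_inter_eq_empty ⟨p, by simp [hpos_c]⟩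
  apply hd.mono
  · rw [varsC_res_inter, hvars_c, Finset.empty_union]
    exact Finset.erase_subset _ _
  · rw [posC_res_inter, hpos_c, Finset.erase_union_distrib, Finset.erase_singleton,
      Finset.empty_union]
    exact Finset.erase_subset _ _

theorem res_of_mem_union (hc : QHcond Q H c) (hd : QHcond Q H d) (hpc : (p, true) ∈ c)
    (hpd : (p, false) ∈ d) (hp : p ∈ Q ∪ H) : QHcond Q H (res c d p) := by
  rcases Finset.mem_union.1 hp with hpQ | hpH
  · exact hc.res_of_mem_Q hd (mem_varsC.2 ⟨_, hpc⟩) (mem_varsC.2 ⟨_, hpd⟩) hpQ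
  · exact hc.res_of_mem_H hd (mem_posC.2 hpc) hpH

end QHcond

theorem qh_conditions_preserved_by_resolution_general {c d : Clause α} {Q H : Finset α} {p : α}
    (hclash : (p, true) ∈ c ∧ (p, false) ∈ d ∨ (p, false) ∈ c ∧ (p, true) ∈ d)
    (hp : p ∈ Q ∪ H) (hc : QHcond Q H c) (hd : QHcond Q H d) :
    QHcond Q H (res c d p) := by
  rcases hclash with ⟨hpc, hpd⟩ | ⟨hpc, hpd⟩
  · exact hc.res_of_mem_union hd hpc hpd hp
  · rw [res_comm]
    exact hd.res_of_mem_union hc hpd hpc hp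

end

/-- If disjoint sets `Q`, `H` of atoms covering the variables of two
resolvable clauses `c1`, `c2` satisfy the QH-conditions for both `c1` and `c2`,
then they satisfy the QH-conditions for `res(c1,c2)`. -/
theorem qh_conditions_preserved_by_resolution
    (c1 c2 : Clause α) (Q H : Finset α) (p : α)
    (h1 : IsClause c1) (h2 : IsClause c2) (hres : ResolvableOn c1 c2 p)
    (hdisj : Q ∩ H = ∅) (hcover : varsC (c1 ∪ c2) ⊆ Q ∪ H)
    (hq1 : QHcond Q H c1) (hq2 : QHcond Q H c2) :
    QHcond Q H (res c1 c2 p) :=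
  qh_conditions_preserved_by_resolution_general hres.1 (hcover hres.mem_varsC_union) hq1 hq2
end

section
/- Let ψ and φ be propositional formulas and V ⊆ 𝒜. If φ is irrelevant to V (IR(φ,V)), then Forget(ψ ∧ φ, V) ≡ Forget(ψ, V) ∧ φ. -/
variable {α : Type*} [Fintype α] [DecidableEq α]

/-!
Forgetting is existential quantification over the truth values of the forgotten atoms: `I` is a
model of `Forget φ V` iff some model of `φ` agrees with `I` outside `V`. A formula irrelevant to `V`
has the same truth value in all interpretations that agree outside `V`, so as a conjunct it can be
pulled out of the quantifier.
-/

section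

omit [Fintype α]

namespace PropForm

variable {I J : Set α} {V : List α} {p : α} {φ χ : PropForm α}

theorem sat_congr (h : ∀ q ∈ vars φ, (q ∈ I ↔ q ∈ J)) : Sat I φ ↔ Sat J φ := by
  induction φ with
  | var q => exact h q (Finset.mem_singleton_self q)
  | tru | fls => exact Iff.rfl
  | neg a iha => exact not_congr (iha h)
  | conj a b iha ihb =>
    exact and_congr (iha fun q hq => h q (Finset.mem_union_left _ hq))
      (ihb fun q hq => h q (Finset.mem_union_right _ hq))
  | disj a b iha ihb =>
    exact or_congr (iha fun q hq => h q (Finset.mem_union_left _ hq))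
      (ihb fun q hq => h q (Finset.mem_union_right _ hq))

theorem IR.sat_congr (h : IR φ V) (hIJ : ∀ q ∉ V, (q ∈ I ↔ q ∈ J)) : Sat I φ ↔ Sat J φ := by
  obtain ⟨φ', hφ, hV⟩ := h
  calc Sat I φ ↔ Sat I φ' := hφ I
    _ ↔ Sat J φ' := PropForm.sat_congr fun q hq => hIJ q fun hqV => hV q hqV hq
    _ ↔ Sat J φ := (hφ J).symm

theorem sat_subst_iff (hp : p ∈ J ↔ Sat I χ) (hJ : ∀ q ≠ p, (q ∈ J ↔ q ∈ I)) :
    Sat I (subst p χ φ) ↔ Sat J φ := by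
  induction φ with
  | var q =>
    obtain rfl | hq := eq_or_ne q p
    · simpa [subst, Sat] using hp.symm
    · simpa [subst, Sat, hq] using (hJ q hq).symm
  | tru | fls => exact Iff.rfl
  | neg a iha => exact not_congr iha
  | conj a b iha ihb => exact and_congr iha ihb
  | disj a b iha ihb => exact or_congr iha ihb

theorem sat_forget1_iff :
    Sat I (forget1 φ p) ↔ ∃ J, (∀ q ≠ p, (q ∈ J ↔ q ∈ I)) ∧ Sat J φ := by
  constructor
  · have hinsert : ∀ q ≠ p, (q ∈ insert p I ↔ q ∈ I) := fun q hq => by simp [hq]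
    have hdiff : ∀ q ≠ p, (q ∈ I \ {p} ↔ q ∈ I) := fun q hq => by simp [hq]
    rintro (htru | hfls)
    · exact ⟨insert p I, hinsert, (sat_subst_iff (by simp [Sat]) hinsert).mp htru⟩
    · exact ⟨I \ {p}, hdiff, (sat_subst_iff (by simp [Sat]) hdiff).mp hfls⟩
  · rintro ⟨J, hJ, hφ⟩
    by_cases hp : p ∈ J
    · exact Or.inl ((sat_subst_iff (by simp [Sat, hp]) hJ).mpr hφ)
    · exact Or.inr ((sat_subst_iff (by simp [Sat, hp]) hJ).mpr hφ)

theorem sat_forget_iff :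
    Sat I (Forget φ V) ↔ ∃ J, (∀ q ∉ V, (q ∈ J ↔ q ∈ I)) ∧ Sat J φ := by
  induction V generalizing φ with
  | nil =>
    refine ⟨fun hφ => ⟨I, fun _ _ => Iff.rfl, hφ⟩, ?_⟩
    rintro ⟨J, hJ, hφ⟩
    obtain rfl : J = I := Set.ext fun q => hJ q List.not_mem_nil
    exact hφ
  | cons p V ih =>
    simp only [Forget, ih, sat_forget1_iff]
    constructor
    · rintro ⟨J, hJ, K, hK, hφ⟩
      refine ⟨K, fun q hq => ?_, hφ⟩
      have hqp : q ≠ p := List.ne_of_not_mem_cons hq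
      have hqV : q ∉ V := List.not_mem_of_not_mem_cons hq
      exact (hK q hqp).trans (hJ q hqV)
    · rintro ⟨K, hK, hφ⟩
      refine ⟨{q | if q ∈ V then q ∈ K else q ∈ I}, fun q hqV => by simp [hqV], K, ?_, hφ⟩
      intro q hqp
      by_cases hqV : q ∈ V
      · simp [hqV]
      · simpa [hqV] using hK q (List.not_mem_cons_of_ne_of_not_mem hqp hqV)

end PropForm

open PropForm in
theorem forget_conj_irrelevant_general (ψ φ : PropForm α) (V : List α) (h : IR φ V) :
    equivalent (Forget (conj ψ φ) V) (conj (Forget ψ V) φ) := by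
  intro I
  calc Sat I (Forget (conj ψ φ) V)
      ↔ ∃ J, (∀ q ∉ V, (q ∈ J ↔ q ∈ I)) ∧ Sat J ψ ∧ Sat J φ := sat_forget_iff
    _ ↔ ∃ J, ((∀ q ∉ V, (q ∈ J ↔ q ∈ I)) ∧ Sat J ψ) ∧ Sat I φ :=
        exists_congr fun J => by
          rw [← and_assoc]
          exact and_congr_right fun hJ => h.sat_congr hJ.1
    _ ↔ (∃ J, (∀ q ∉ V, (q ∈ J ↔ q ∈ I)) ∧ Sat J ψ) ∧ Sat I φ := exists_and_right
    _ ↔ Sat I (conj (Forget ψ V) φ) := and_congr_left' sat_forget_iff.symm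

end

/-- If `IR(φ,V)`, then `Forget(ψ ∧ φ, V) ≡ Forget(ψ, V) ∧ φ`. -/
theorem forget_conj_irrelevant (ψ φ : PropForm α) (V : List α)
    (h : PropForm.IR φ V) :
    PropForm.equivalent (PropForm.Forget (PropForm.conj ψ φ) V)
      (PropForm.conj (PropForm.Forget ψ V) φ) :=
  forget_conj_irrelevant_general ψ φ V h
end

section
/- Let φ and ψ be propositional formulas and V ⊆ 𝒜. Then φ ≡ Forget(ψ, V) if and only if Mod(φ) equals the extension Mod(ψ)↑V, i.e., Mod(φ) = {X ⊆ 𝒜 | there exists M ∈ Mod(ψ) with X \ V = M \ V}. -/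
variable {α : Type*} [Fintype α] [DecidableEq α]

/-! `φ[p/⊤]` and `φ[p/⊥]` hold in `X` exactly when `φ` holds in `X ∪ {p}` and in `X \ {p}`
respectively. These two interpretations are the ones that agree with `X` off `p`, so forgetting `p`
replaces `Mod(φ)` by its `{p}`-extension. Extending along `{p}` and then along `V` is extending
along `{p} ∪ V`, and induction on `V` concludes. -/

namespace PropForm

variable {β : Type*}

/-- `Mod(φ)`, the set of models of `φ`. -/
def models (φ : PropForm β) : Set (Set β) := {X | Sat X φ}

/-- The extension `S↑V` of a set `S` of interpretations: all interpretations `V`-bisimilar to a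
member of `S`. Bisimilarity is spelled out as equality off `V`. -/
def extension (S : Set (Set β)) (V : Set β) : Set (Set β) := {X | ∃ M ∈ S, X \ V = M \ V}

theorem equivalent_iff_models_eq {φ ψ : PropForm β} : equivalent φ ψ ↔ models φ = models ψ :=
  Set.ext_iff.symm

theorem extension_empty (S : Set (Set β)) : extension S ∅ = S := by
  simp [extension]

theorem extension_extension (S : Set (Set β)) (V W : Set β) :
    extension (extension S V) W = extension S (V ∪ W) := by
  ext X
  constructor
  · rintro ⟨N, ⟨M, hM, hNM⟩, hXN⟩
    refine ⟨M, hM, ?_⟩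
    calc
      X \ (V ∪ W) = (X \ W) \ V := by rw [Set.sdiff_sdiff, Set.union_comm]
      _ = (N \ V) \ W := by rw [hXN, Set.sdiff_sdiff_comm]
      _ = M \ (V ∪ W) := by rw [hNM, Set.sdiff_sdiff]
  · rintro ⟨M, hM, hXM⟩
    refine ⟨W.ite M X, ⟨M, hM, ?_⟩, (Set.ite_sdiff_self W M X).symm⟩
    have hoff : (X \ W) \ V = (M \ W) \ V := by
      simpa only [Set.sdiff_sdiff, Set.union_comm W V] using hXM
    calc
      W.ite M X \ V = (M ∩ W) \ V ∪ (X \ W) \ V := Set.union_sdiff_distrib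
      _ = (M ∩ W ∪ M \ W) \ V := by rw [hoff, Set.union_sdiff_distrib]
      _ = M \ V := by rw [Set.inter_union_sdiff]

theorem sdiff_singleton_eq_sdiff_singleton_iff {X M : Set β} {p : β} :
    X \ {p} = M \ {p} ↔ M = insert p X ∨ M = X \ {p} := by
  constructor
  · intro h
    by_cases hp : p ∈ M
    · left
      rw [← Set.insert_sdiff_singleton, h, Set.insert_sdiff_singleton, Set.insert_eq_of_mem hp]
    · right
      rw [h, Set.sdiff_singleton_eq_self hp]
  · rintro (rfl | rfl)
    · simp
    · exact sdiff_idem.symm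

theorem mem_extension_singleton {S : Set (Set β)} {X : Set β} {p : β} :
    X ∈ extension S {p} ↔ insert p X ∈ S ∨ X \ {p} ∈ S := by
  simp only [extension, Set.mem_ofPred_eq, sdiff_singleton_eq_sdiff_singleton_iff, and_or_left,
    exists_or, exists_eq_right]

variable [DecidableEq β]

theorem sat_subst (I : Set β) (p : β) (χ φ : PropForm β) :
    Sat I (subst p χ φ) ↔ Sat {q | if q = p then Sat I χ else q ∈ I} φ := by
  induction φ with
  | var q => by_cases hq : q = p <;> simp [subst, Sat, hq]
  | tru | fls => rfl
  | neg φ ih => exact not_congr ih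
  | conj φ ψ ihφ ihψ => exact and_congr ihφ ihψ
  | disj φ ψ ihφ ihψ => exact or_congr ihφ ihψ

theorem sat_subst_tru (I : Set β) (p : β) (φ : PropForm β) :
    Sat I (subst p tru φ) ↔ Sat (insert p I) φ := by
  have hI : {q | if q = p then Sat I tru else q ∈ I} = insert p I := by
    ext q
    by_cases hq : q = p <;> simp [Sat, hq]
  rw [sat_subst, hI]

theorem sat_subst_fls (I : Set β) (p : β) (φ : PropForm β) :
    Sat I (subst p fls φ) ↔ Sat (I \ {p}) φ := by
  have hI : {q | if q = p then Sat I fls else q ∈ I} = I \ {p} := by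
    ext q
    by_cases hq : q = p <;> simp [Sat, hq]
  rw [sat_subst, hI]

theorem models_forget1 (φ : PropForm β) (p : β) :
    models (forget1 φ p) = extension (models φ) {p} := by
  ext X
  rw [mem_extension_singleton]
  exact or_congr (sat_subst_tru X p φ) (sat_subst_fls X p φ)

theorem models_forget (φ : PropForm β) (V : List β) :
    models (Forget φ V) = extension (models φ) {a | a ∈ V} := by
  induction V generalizing φ with
  | nil => simp only [Forget, List.not_mem_nil, Set.ofPred_false, extension_empty]
  | cons p V ih =>
    calc
      models (Forget φ (p :: V)) = extension (models (forget1 φ p)) {a | a ∈ V} := ih _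
      _ = extension (models φ) ({p} ∪ {a | a ∈ V}) := by
        rw [models_forget1, extension_extension]
      _ = extension (models φ) {a | a ∈ p :: V} := by
        congr 1
        ext
        simp

end PropForm

open PropForm in
theorem equiv_forget_iff_models_eq_extension_general {β : Type*} [DecidableEq β]
    (φ ψ : PropForm β) (V : List β) :
    equivalent φ (Forget ψ V) ↔ models φ = extension (models ψ) {a | a ∈ V} := by
  rw [equivalent_iff_models_eq, models_forget]

/-- `φ ≡ Forget(ψ, V)` iff `Mod(φ)` is the `V`-extension of `Mod(ψ)`,
i.e. `Mod(φ) = {X ⊆ 𝒜 | ∃ M ∈ Mod(ψ), X \ V = M \ V}`. -/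
theorem equiv_forget_iff_models_eq_extension (φ ψ : PropForm α) (V : List α) :
    PropForm.equivalent φ (PropForm.Forget ψ V) ↔
      {X : Set α | PropForm.Sat X φ} =
        {X : Set α | ∃ M : Set α, PropForm.Sat M ψ ∧
          X \ {a | a ∈ V} = M \ {a | a ∈ V}} :=
  equiv_forget_iff_models_eq_extension_general φ ψ V
end
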